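/- Let V be a vertex operator algebra over an algebraically closed field F with char F ≠ 2, n a nonnegative integer, and M = ⊕_{m≥0} M(m) an irreducible Z_+-graded V-module with M(0) ≠ 0. Then for each i ≤ n with M(i) ≠ 0, M(i) is a simple A_n(V)-module; moreover if i ≠ j, i, j ≤ n and M(i), M(j) are nonzero, then M(i) and M(j) are inequivalent simple A_n(V)-modules. -/

import Mathlib

/-!
The proof rests on one fact: on the part of `M` of degree at most `n`, a composite `u_P a_Q`
of two modes of homogeneous vectors coincides with a linear combination of single modes of the
same degree shift, and this combination depends only on `n`, not on the vector acted upon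
(`GradedMod.exists_modes_eq_comp`). It follows from the Jacobi identity with
`p = deg u + n`, where the terms with `u` acting first vanish, by descending induction on `Q`.

Hence, for nonzero `N ≤ M(m)`, the vectors `u_k w` with `u` homogeneous and `w ∈ N` span a weak
submodule, which is all of `M` by irreducibility (`GradedMod.orbit_eq_top`). Taking the component
of degree `m`, where only zero modes contribute, shows that a subspace of `M(m)` stable under
zero modes is `0` or `M(m)`.

For inequivalence let `l < m` be the two degrees. Some composite lowering from `M(m)` to `M(0)`
and raising back to `M(m)` is nonzero, and it vanishes on `M(l)`, because it first lowers the
degree by `m > l`. Since it is given on both spaces by the same combination of zero modes, no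
isomorphism can commute with the zero modes. As `L(0)` plays no role, the argument does not see
the characteristic, even when `l ≡ m` modulo `char F`.
-/

/-!
Common definitions: vertex operator algebras over a field `F`, weak modules,
`ℤ₊`-graded modules, the subspaces `O_n(V)`, the products `*_n`, and the
spaces `Ω_n(M)`, following Li Ren, "Modular `A_n(V)` theory".
-/

universe u v w

/-- The data and axioms of a vertex operator algebra over a field `F`.

`coeff u k` is the operator `u_k` (the coefficient of `z^{-k-1}` in `Y(u,z)`),
`vac` is the vacuum vector `1`, `omg` is the Virasoro vector `ω`, `cc` is the
central charge, `deg d` is the homogeneous subspace `V_d`, and `proj d` is the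
projection onto `V_d` coming from the direct sum decomposition `V = ⊕_d V_d`.
The Jacobi identity is imposed in its equivalent component (Borcherds identity)
form, and the Virasoro relation is stated multiplied by `2` (using
`binomial(m+1,3) = (m³-m)/6`), which is equivalent to the usual relation since
`char F ≠ 2`. -/
structure VOA (F : Type u) (V : Type v) [Field F] [AddCommGroup V] [Module F V] where
  coeff : V → ℤ → V →ₗ[F] V
  coeff_add : ∀ (u v : V) (k : ℤ), coeff (u + v) k = coeff u k + coeff v k
  coeff_smul : ∀ (c : F) (u : V) (k : ℤ), coeff (c • u) k = c • coeff u k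
  vac : V
  omg : V
  cc : F
  deg : ℤ → Submodule F V
  proj : ℤ → V →ₗ[F] V
  proj_mem : ∀ (d : ℤ) (a : V), proj d a ∈ deg d
  proj_of_mem : ∀ (d : ℤ) (a : V), a ∈ deg d → proj d a = a
  proj_of_mem_ne : ∀ (d e : ℤ) (a : V), a ∈ deg e → d ≠ e → proj d a = 0
  proj_finite : ∀ a : V, (Function.support fun d : ℤ => proj d a).Finite
  proj_sum : ∀ a : V, (∑ᶠ d : ℤ, proj d a) = a
  deg_fd : ∀ d : ℤ, FiniteDimensional F (deg d)
  deg_bdd : ∃ N : ℤ, ∀ d : ℤ, d < N → deg d = ⊥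
  trunc : ∀ u a : V, ∃ N : ℤ, ∀ k : ℤ, N ≤ k → coeff u k a = 0
  vac_coeff : ∀ (k : ℤ) (a : V), coeff vac k a = if k = -1 then a else 0
  creation : ∀ (a : V) (k : ℤ), 0 ≤ k → coeff a k vac = 0
  creation_neg_one : ∀ a : V, coeff a (-1) vac = a
  vac_deg : vac ∈ deg 0
  omg_deg : omg ∈ deg 2
  deg_coeff : ∀ (s t k : ℤ) (u a : V), u ∈ deg s → a ∈ deg t →
    coeff u k a ∈ deg (s + t - k - 1)
  jacobi : ∀ (u a w : V) (p q r : ℤ),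
    (∑ᶠ i : ℕ, Ring.choose p i • coeff (coeff u (r + i) a) (p + q - i) w) =
      ∑ᶠ i : ℕ, ((-1 : ℤ) ^ i * Ring.choose r i) •
        (coeff u (p + r - i) (coeff a (q + i) w)
          - (r.negOnePow : ℤ) • coeff a (q + r - i) (coeff u (p + i) w))
  virasoro : ∀ (m k : ℤ) (a : V),
    (2 : ℤ) • (coeff omg (m + 1) (coeff omg (k + 1) a)
        - coeff omg (k + 1) (coeff omg (m + 1) a)) =
      (2 * (m - k)) • coeff omg (m + k + 1) a +
        (if m + k = 0 then (Ring.choose (m + 1) 3 : ℤ) • (cc • a) else 0)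
  L_neg_one_deriv : ∀ (u : V) (k : ℤ),
    coeff (coeff omg 0 u) k = (-k : ℤ) • coeff u (k - 1)
  L_zero : ∀ (d : ℤ) (a : V), a ∈ deg d → coeff omg 1 a = (d : ℤ) • a

namespace VOA

variable {F : Type u} {V : Type v} [Field F] [AddCommGroup V] [Module F V]

/-- `res voa a e b k = Res_z Y(a,z)b (1+z)^e / z^k = Σ_{j≥0} binom(e,j) a_{j-k} b`. -/
noncomputable def res (voa : VOA F V) (a : V) (e : ℤ) (b : V) (k : ℤ) : V :=
  ∑ᶠ j : ℕ, Ring.choose e j • voa.coeff a ((j : ℤ) - k) b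

/-- the circle product `a ∘_{n,t}^s b = Res_z Y(a,z)b (1+z)^{deg a+n+s}/z^{2n+2+t}`,
for `a` homogeneous of degree `d`. -/
noncomputable def circ (voa : VOA F V) (a : V) (d : ℤ) (b : V) (n : ℕ) (s t : ℤ) : V :=
  voa.res a (d + n + s) b (2 * n + 2 + t)

/-- `O_n(V)`: the span of all `a ∘_{n,t}^s b` for homogeneous `a`, `s ≤ t`, together
with all `L(-1)a + L(0)a`. -/
noncomputable def On (voa : VOA F V) (n : ℕ) : Submodule F V :=
  Submodule.span F
    ({x : V | ∃ (d : ℤ) (a b : V) (s t : ℤ),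
        a ∈ voa.deg d ∧ s ≤ t ∧ x = voa.circ a d b n s t} ∪
      {x : V | ∃ a : V, x = voa.coeff voa.omg 0 a + voa.coeff voa.omg 1 a})

/-- the product `a *_n b` for `a` homogeneous of degree `d`:
`a *_n b = Σ_{m=0}^n (-1)^m binom(m+n,n) Res_z Y(a,z) (1+z)^{deg a+n}/z^{n+m+1} b`. -/
noncomputable def hstar (voa : VOA F V) (n : ℕ) (a : V) (d : ℤ) (b : V) : V :=
  ∑ m ∈ Finset.range (n + 1),
    ((-1 : ℤ) ^ m * ((m + n).choose n : ℤ)) • voa.res a (d + n) b ((n : ℤ) + m + 1)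

/-- the product `a *_n b` for arbitrary `a`, extended linearly from homogeneous `a`
using the projections onto homogeneous subspaces. -/
noncomputable def star (voa : VOA F V) (n : ℕ) (a b : V) : V :=
  ∑ᶠ d : ℤ, voa.hstar n (voa.proj d a) d b

end VOA

/-- A weak module over a vertex operator algebra: `mcoeff v k` is the operator `v_k`
on `M`; the axioms are truncation, `Y_M(1,z) = Id`, and the (component form of the)
Jacobi identity. -/
structure WeakMod (F : Type u) (V : Type v) (M : Type w) [Field F] [AddCommGroup V]
    [Module F V] [AddCommGroup M] [Module F M] (voa : VOA F V) where
  mcoeff : V → ℤ → M →ₗ[F] M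
  mcoeff_add : ∀ (u v : V) (k : ℤ), mcoeff (u + v) k = mcoeff u k + mcoeff v k
  mcoeff_smul : ∀ (c : F) (u : V) (k : ℤ), mcoeff (c • u) k = c • mcoeff u k
  trunc : ∀ (u : V) (w : M), ∃ N : ℤ, ∀ k : ℤ, N ≤ k → mcoeff u k w = 0
  vac_act : ∀ (k : ℤ) (w : M), mcoeff voa.vac k w = if k = -1 then w else 0
  jacobi : ∀ (u a : V) (w : M) (p q r : ℤ),
    (∑ᶠ i : ℕ, Ring.choose p i • mcoeff (voa.coeff u (r + i) a) (p + q - i) w) =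
      ∑ᶠ i : ℕ, ((-1 : ℤ) ^ i * Ring.choose r i) •
        (mcoeff u (p + r - i) (mcoeff a (q + i) w)
          - (r.negOnePow : ℤ) • mcoeff a (q + r - i) (mcoeff u (p + i) w))

namespace WeakMod

variable {F : Type u} {V : Type v} {M : Type w} [Field F] [AddCommGroup V] [Module F V]
  [AddCommGroup M] [Module F M] {voa : VOA F V}

/-- `N` is a weak submodule: a subspace stable under all the operators `v_k`. -/
def IsSub (W : WeakMod F V M voa) (N : Submodule F M) : Prop :=
  ∀ (v : V) (k : ℤ), ∀ w ∈ N, W.mcoeff v k w ∈ N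

/-- `Ω_n(M) = {w ∈ M | u_i w = 0 for all homogeneous u and all i ≥ deg u + n}`. -/
def Omega (W : WeakMod F V M voa) (n : ℤ) : Submodule F M :=
  ⨅ (d : ℤ) (v : V) (_ : v ∈ voa.deg d) (i : ℤ) (_ : d + n ≤ i),
    LinearMap.ker (W.mcoeff v i)

/-- the zero mode `o(a) = a_{deg a - 1}`, extended linearly from homogeneous `a`. -/
noncomputable def op (W : WeakMod F V M voa) (a : V) (w : M) : M :=
  ∑ᶠ d : ℤ, W.mcoeff (voa.proj d a) (d - 1) w

/-- irreducibility of a weak module: it is nonzero and it has no weak submodules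
other than `0` and `M`. -/
def Irreducible (W : WeakMod F V M voa) : Prop :=
  (∃ w : M, w ≠ 0) ∧ ∀ N : Submodule F M, W.IsSub N → N = ⊥ ∨ N = ⊤

end WeakMod

/-- A `ℤ₊`-graded module over a vertex operator algebra: a weak module together with
a grading `M = ⊕_{m ≥ 0} M(m)` such that `v_k M(m) ⊆ M(m + deg v - k - 1)`. -/
structure GradedMod (F : Type u) (V : Type v) (M : Type w) [Field F] [AddCommGroup V]
    [Module F V] [AddCommGroup M] [Module F M] (voa : VOA F V)
    extends WeakMod F V M voa where
  gr : ℤ → Submodule F M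
  gr_neg : ∀ m : ℤ, m < 0 → gr m = ⊥
  internal : DirectSum.IsInternal gr
  gr_shift : ∀ (d : ℤ) (v : V), v ∈ voa.deg d → ∀ (m k : ℤ), ∀ w ∈ gr m,
    mcoeff v k w ∈ gr (m + d - k - 1)

/-- A bundled `ℤ₊`-graded module over a vertex operator algebra. -/
structure GradedVMod.{a, b, c} (F : Type a) (V : Type b) [Field F] [AddCommGroup V]
    [Module F V] (voa : VOA F V) where
  carrier : Type c
  [acg : AddCommGroup carrier]
  [mod : Module F carrier]
  str : GradedMod F V carrier voa

attribute [instance] GradedVMod.acg GradedVMod.mod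

/-- Rationality: every `ℤ₊`-graded module is a direct sum of irreducible graded
modules. -/
def VOA.IsRational {F : Type u} {V : Type v} [Field F] [AddCommGroup V] [Module F V]
    (voa : VOA F V) : Prop :=
  ∀ (M : Type v) [AddCommGroup M] [Module F M] (GM : GradedMod F V M voa),
    ∃ (ι : Type v) (N : ι → Submodule F M),
      (∀ i, GM.toWeakMod.IsSub (N i)) ∧
      (∀ i, N i = ⨆ m : ℤ, N i ⊓ GM.gr m) ∧
      (∀ i, N i ≠ ⊥) ∧
      (∀ i, ∀ N' : Submodule F M, GM.toWeakMod.IsSub N' → N' ≤ N i →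
        N' = ⊥ ∨ N' = N i) ∧
      iSupIndep N ∧ (⨆ i, N i) = ⊤
/-! ### Composites of two modes -/

namespace WeakMod

variable {F : Type u} {V : Type v} {M : Type w} [Field F] [AddCommGroup V] [Module F V]
  [AddCommGroup M] [Module F M] {voa : VOA F V}

/-- The span of the modes `v_{deg v - 1 - t}`, `v` homogeneous; these raise the degree by `t`.
The case `t = 0` is the span of the zero modes. -/
def modes (W : WeakMod F V M voa) (t : ℤ) : Submodule F (M →ₗ[F] M) :=
  Submodule.span F {T | ∃ (d : ℤ) (v : V), v ∈ voa.deg d ∧ T = W.mcoeff v (d - 1 - t)}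

theorem mcoeff_zero (W : WeakMod F V M voa) (k : ℤ) : W.mcoeff 0 k = 0 := by
  have h := W.mcoeff_smul 0 0 k
  simpa using h

theorem mcoeff_mem_modes (W : WeakMod F V M voa) {d : ℤ} {v : V} (hv : v ∈ voa.deg d)
    {k t : ℤ} (h : k = d - 1 - t) : W.mcoeff v k ∈ W.modes t :=
  Submodule.subset_span ⟨d, v, hv, by rw [h]⟩

theorem op_of_mem (W : WeakMod F V M voa) {d : ℤ} {v : V} (hv : v ∈ voa.deg d) (w : M) :
    W.op v w = W.mcoeff v (d - 1) w := by
  unfold op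
  rw [finsum_eq_single _ d, voa.proj_of_mem d v hv]
  intro e he
  rw [voa.proj_of_mem_ne e d v hv he, mcoeff_zero, LinearMap.zero_apply]

/-- Stability under modes need only be checked on homogeneous vectors. -/
theorem isSub_of_homogeneous (W : WeakMod F V M voa) (N : Submodule F M)
    (h : ∀ (d : ℤ) (v : V), v ∈ voa.deg d → ∀ (k : ℤ), ∀ w ∈ N, W.mcoeff v k w ∈ N) :
    W.IsSub N := by
  intro v k w hw
  let φ : V →ₗ[F] M :=
    { toFun := fun v => W.mcoeff v k w
      map_add' := fun x y => by rw [W.mcoeff_add]; rfl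
      map_smul' := fun c x => by rw [W.mcoeff_smul]; rfl }
  have hv : v ∈ N.comap φ := by
    rw [← voa.proj_sum v]
    exact finsum_induction (· ∈ N.comap φ) (zero_mem _) (fun _ _ => add_mem)
      fun d => h d _ (voa.proj_mem d v) k w hw
  exact hv

end WeakMod

namespace GradedMod

variable {F : Type u} {V : Type v} {M : Type w} [Field F] [AddCommGroup V] [Module F V]
  [AddCommGroup M] [Module F M] {voa : VOA F V}

theorem eq_zero_of_neg (GM : GradedMod F V M voa) {m : ℤ} (hm : m < 0) {w : M}
    (hw : w ∈ GM.gr m) : w = 0 := by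
  rw [GM.gr_neg m hm] at hw
  exact (Submodule.mem_bot F).1 hw

/-- Modes of high index kill the vectors of degree at most `n`. -/
theorem mcoeff_eq_zero (GM : GradedMod F V M voa) {d : ℤ} {v : V} (hv : v ∈ voa.deg d)
    {n m k : ℤ} (hm : m ≤ n) (hk : d + n ≤ k) {w : M} (hw : w ∈ GM.gr m) :
    GM.mcoeff v k w = 0 :=
  GM.eq_zero_of_neg (by omega) (GM.gr_shift d v hv m k w hw)

/-- Uniform associativity: on all of the degrees at most `n`, a composite of two modes is given
by a single combination of modes. -/
theorem exists_modes_eq_comp (GM : GradedMod F V M voa) (n : ℤ) {d e : ℤ} {u a : V}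
    (hu : u ∈ voa.deg d) (ha : a ∈ voa.deg e) (P Q t : ℤ) (ht : d - 1 - P + (e - 1 - Q) = t) :
    ∃ T ∈ GM.toWeakMod.modes t, ∀ m ≤ n, ∀ w ∈ GM.gr m,
      GM.mcoeff u P (GM.mcoeff a Q w) = T w := by
  suffices H : ∀ (N : ℕ) (P Q : ℤ), d - 1 - P + (e - 1 - Q) = t → e + n ≤ Q + N →
      ∃ T ∈ GM.toWeakMod.modes t, ∀ m ≤ n, ∀ w ∈ GM.gr m,
        GM.mcoeff u P (GM.mcoeff a Q w) = T w from
    H (e + n - Q).toNat P Q ht (by omega)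
  intro N
  induction N with
  | zero =>
    intro P Q _ hQ
    refine ⟨0, zero_mem _, fun m hm w hw => ?_⟩
    rw [GM.mcoeff_eq_zero ha hm (by omega) hw, map_zero, LinearMap.zero_apply]
  | succ N ih =>
    intro P Q hPQ hQ
    -- `r` is chosen so that the index `p = d + n` makes `u_{p+i}` vanish in degrees `≤ n`
    set r : ℤ := P - (d + n) with hr
    have ih' : ∀ i : ℕ, ∃ T ∈ GM.toWeakMod.modes t, ∀ m ≤ n, ∀ w ∈ GM.gr m,
        GM.mcoeff u (P - (i + 1 : ℕ)) (GM.mcoeff a (Q + (i + 1 : ℕ)) w) = T w := fun i =>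
      ih _ _ (by push_cast; omega) (by push_cast at hQ ⊢; omega)
    choose T hT hTw using ih'
    obtain ⟨K, hK⟩ := voa.trunc u a
    refine ⟨∑ i ∈ Finset.range (K - r).toNat, Ring.choose (d + n) i •
          GM.mcoeff (voa.coeff u (r + i) a) (d + n + Q - i)
        - ∑ i ∈ Finset.range N, ((-1 : ℤ) ^ (i + 1) * Ring.choose r (i + 1)) • T i, ?_, ?_⟩
    · refine sub_mem (sum_mem fun i _ => zsmul_mem ?_ _) (sum_mem fun i _ => zsmul_mem (hT i) _)
      exact GM.toWeakMod.mcoeff_mem_modes (voa.deg_coeff d e (r + i) u a hu ha) (by omega)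
    · intro m hm w hw
      have J := GM.jacobi u a w (d + n) Q r
      rw [finsum_eq_sum_of_support_subset (s := Finset.range (K - r).toNat),
        finsum_eq_sum_of_support_subset (s := Finset.range (N + 1)),
        Finset.sum_range_succ'] at J
      · rw [LinearMap.sub_apply, LinearMap.sum_apply, LinearMap.sum_apply]
        simp only [LinearMap.smul_apply]
        rw [J, eq_sub_iff_add_eq, add_comm]
        congr 1
        · refine Finset.sum_congr rfl fun i _ => ?_
          rw [← hTw i m hm w hw, GM.mcoeff_eq_zero hu hm (by omega) hw, map_zero, smul_zero,
            sub_zero, show d + n + r - ((i + 1 : ℕ) : ℤ) = P - ((i + 1 : ℕ) : ℤ) by omega]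
        · rw [GM.mcoeff_eq_zero hu hm (by omega) hw, map_zero, smul_zero, sub_zero]
          simp [hr]
      · intro i hi
        by_contra hiN
        refine hi ?_
        simp only [Finset.coe_range, Set.mem_Iio, not_lt] at hiN
        dsimp only
        rw [GM.mcoeff_eq_zero hu hm (by omega) hw,
          GM.mcoeff_eq_zero ha hm (by push_cast at hQ; omega) hw]
        simp
      · intro i hi
        by_contra hiN
        refine hi ?_
        simp only [Finset.coe_range, Set.mem_Iio, not_lt] at hiN
        dsimp only
        rw [hK _ (by omega), WeakMod.mcoeff_zero]
        simp

/-! ### Generation of irreducible modules -/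

/-- The span of all `v_k w` with `v` homogeneous and `w ∈ N`. -/
def orbit (GM : GradedMod F V M voa) (N : Submodule F M) : Submodule F M :=
  Submodule.span F {x | ∃ (d : ℤ) (v : V) (k : ℤ) (w : M),
    v ∈ voa.deg d ∧ w ∈ N ∧ x = GM.mcoeff v k w}

theorem modes_apply_mem_orbit (GM : GradedMod F V M voa) {N : Submodule F M} {t : ℤ}
    {T : M →ₗ[F] M} (hT : T ∈ GM.toWeakMod.modes t) {w : M} (hw : w ∈ N) :
    T w ∈ GM.orbit N := by
  have h : GM.toWeakMod.modes t ≤ (GM.orbit N).comap (LinearMap.applyₗ w) := by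
    refine Submodule.span_le.2 ?_
    rintro _ ⟨d, v, hv, rfl⟩
    exact Submodule.subset_span ⟨d, v, _, w, hv, hw, rfl⟩
  exact h hT

theorem orbit_eq_top (GM : GradedMod F V M voa) (hirr : GM.toWeakMod.Irreducible) {m : ℤ}
    {N : Submodule F M} (hN : N ≤ GM.gr m) (hN0 : N ≠ ⊥) : GM.orbit N = ⊤ := by
  refine (hirr.2 _ (GM.toWeakMod.isSub_of_homogeneous _ ?_)).resolve_left ?_
  · intro d u hu P x hx
    have h : GM.orbit N ≤ (GM.orbit N).comap (GM.mcoeff u P) := by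
      refine Submodule.span_le.2 ?_
      rintro _ ⟨e, a, Q, w, ha, hw, rfl⟩
      obtain ⟨T, hT, hTw⟩ := GM.exists_modes_eq_comp m hu ha P Q _ rfl
      rw [SetLike.mem_coe, Submodule.mem_comap, hTw m le_rfl w (hN hw)]
      exact GM.modes_apply_mem_orbit hT hw
    exact h hx
  · intro hbot
    refine hN0 (eq_bot_iff.2 fun w hw => ?_)
    rw [← hbot]
    refine Submodule.subset_span ⟨0, voa.vac, -1, w, voa.vac_deg, hw, ?_⟩
    rw [GM.vac_act, if_pos rfl]

/-- The grading provides a projection onto each homogeneous component. -/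
theorem exists_proj (GM : GradedMod F V M voa) (m : ℤ) :
    ∃ π : M →ₗ[F] M, (∀ w ∈ GM.gr m, π w = w) ∧ ∀ k ≠ m, ∀ w ∈ GM.gr k, π w = 0 := by
  classical
  let := GM.internal.chooseDecomposition
  refine ⟨(GM.gr m).subtype ∘ₗ DirectSum.component F ℤ (fun k => GM.gr k) m ∘ₗ
    (DirectSum.decomposeLinearEquiv GM.gr).toLinearMap, fun w hw => ?_, fun k hk w hw => ?_⟩
  · exact DirectSum.decompose_of_mem_same GM.gr hw
  · exact DirectSum.decompose_of_mem_ne GM.gr hw hk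

/-- In an irreducible module, every nonzero vector of degree `m` is moved by a single mode to a
nonzero vector of any given degree occurring in the module. -/
theorem exists_mcoeff_ne_zero (GM : GradedMod F V M voa) (hirr : GM.toWeakMod.Irreducible)
    {m l : ℤ} {x : M} (hx : x ∈ GM.gr m) (hx0 : x ≠ 0) (hl : GM.gr l ≠ ⊥) :
    ∃ (d : ℤ) (v : V) (k : ℤ), v ∈ voa.deg d ∧ m + d - k - 1 = l ∧ GM.mcoeff v k x ≠ 0 := by
  by_contra! hcon
  obtain ⟨π, hπ, hπ'⟩ := GM.exists_proj l
  have htop := GM.orbit_eq_top hirr (N := F ∙ x) (m := m) (by simpa using hx) (by simpa using hx0)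
  have hker : GM.orbit (F ∙ x) ≤ LinearMap.ker π := by
    refine Submodule.span_le.2 ?_
    rintro _ ⟨d, v, k, w, hv, hw, rfl⟩
    obtain ⟨c, rfl⟩ := Submodule.mem_span_singleton.1 hw
    rw [SetLike.mem_coe, LinearMap.mem_ker, map_smul, map_smul]
    by_cases hdeg : m + d - k - 1 = l
    · rw [hcon d v k hv hdeg, map_zero, smul_zero]
    · rw [hπ' _ hdeg _ (GM.gr_shift d v hv m k x hx), smul_zero]
  refine hl (eq_bot_iff.2 fun y hy => ?_)
  have hy0 : π y = 0 := hker (htop ▸ Submodule.mem_top)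
  rwa [hπ y hy] at hy0

/-! ### Simplicity and inequivalence of the graded pieces -/

theorem eq_bot_or_eq_gr (GM : GradedMod F V M voa) (hirr : GM.toWeakMod.Irreducible) {m : ℤ}
    {N : Submodule F M} (hN : N ≤ GM.gr m)
    (hop : ∀ a : V, ∀ w ∈ N, GM.toWeakMod.op a w ∈ N) : N = ⊥ ∨ N = GM.gr m := by
  refine or_iff_not_imp_left.2 fun hN0 => le_antisymm hN fun y hy => ?_
  obtain ⟨π, hπ, hπ'⟩ := GM.exists_proj m
  have hle : GM.orbit N ≤ N.comap π := by
    refine Submodule.span_le.2 ?_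
    rintro _ ⟨d, v, k, w, hv, hw, rfl⟩
    rw [SetLike.mem_coe, Submodule.mem_comap]
    have hmem := GM.gr_shift d v hv m k w (hN hw)
    by_cases hk : k = d - 1
    · subst hk
      rw [show m + d - (d - 1) - 1 = m by ring] at hmem
      rw [hπ _ hmem, ← GM.toWeakMod.op_of_mem hv]
      exact hop v w hw
    · rw [hπ' _ (by omega) _ hmem]
      exact zero_mem N
  have hyN : π y ∈ N := hle (GM.orbit_eq_top hirr hN hN0 ▸ Submodule.mem_top)
  rwa [hπ y hy] at hyN

/-- A combination of zero modes separating two degrees `l < m`: it kills `M(l)` but not `M(m)`.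
On `M(m)` it is a lowering to `M(0)` followed by a raising back to `M(m)`. -/
theorem exists_separating (GM : GradedMod F V M voa) (hirr : GM.toWeakMod.Irreducible)
    (h0 : GM.gr 0 ≠ ⊥) {l m : ℤ} (hlm : l < m) (hm : GM.gr m ≠ ⊥) :
    ∃ T ∈ GM.toWeakMod.modes 0, (∀ w ∈ GM.gr l, T w = 0) ∧ ∃ w ∈ GM.gr m, T w ≠ 0 := by
  obtain ⟨x, hx, hx0⟩ := Submodule.exists_mem_ne_zero_of_ne_bot hm
  obtain ⟨d, u, p, hu, hdeg, hne⟩ := GM.exists_mcoeff_ne_zero hirr hx hx0 h0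
  have hy := GM.gr_shift d u hu m p x hx
  rw [hdeg] at hy
  obtain ⟨e, a, q, ha, hdeg', hne'⟩ := GM.exists_mcoeff_ne_zero hirr hy hne hm
  obtain ⟨T, hT, hTw⟩ := GM.exists_modes_eq_comp m ha hu q p 0 (by omega)
  refine ⟨T, hT, fun w hw => ?_, x, hx, ?_⟩
  · rw [← hTw l hlm.le w hw,
      GM.eq_zero_of_neg (by omega) (GM.gr_shift d u hu l p w hw), map_zero]
  · rwa [← hTw m le_rfl x hx]

/-- A map commuting with all `o(a)` on `M(m)` commutes with combinations of zero modes there. -/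
theorem map_modes_zero (GM : GradedMod F V M voa) {m : ℤ} {f : M →ₗ[F] M}
    (hf : ∀ a : V, ∀ w ∈ GM.gr m, f (GM.toWeakMod.op a w) = GM.toWeakMod.op a (f w))
    {T : M →ₗ[F] M} (hT : T ∈ GM.toWeakMod.modes 0) {w : M} (hw : w ∈ GM.gr m) :
    f (T w) = T (f w) := by
  induction hT using Submodule.span_induction with
  | mem T h =>
    obtain ⟨d, v, hv, rfl⟩ := h
    rw [sub_zero, ← GM.toWeakMod.op_of_mem hv, ← GM.toWeakMod.op_of_mem hv, hf v w hw]
  | zero => simp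
  | add T S _ _ hT hS => simp [hT, hS]
  | smul c T _ hT => simp [hT]

theorem modes_zero_apply_mem (GM : GradedMod F V M voa) {m : ℤ}
    {T : M →ₗ[F] M} (hT : T ∈ GM.toWeakMod.modes 0) {w : M} (hw : w ∈ GM.gr m) :
    T w ∈ GM.gr m := by
  have h : GM.toWeakMod.modes 0 ≤ (GM.gr m).comap (LinearMap.applyₗ w) := by
    refine Submodule.span_le.2 ?_
    rintro _ ⟨d, v, hv, rfl⟩
    have := GM.gr_shift d v hv m (d - 1 - 0) w hw
    rwa [show m + d - (d - 1 - 0) - 1 = m by ring] at this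
  exact h hT

end GradedMod

/-- Theorem 3.2(4), second part: for an irreducible `ℤ₊`-graded
`V`-module `M` with `M(0) ≠ 0`, each nonzero `M(i)` with `i ≤ n` is a simple
`A_n(V)`-module, and nonzero `M(i)`, `M(j)` with `i ≠ j`, `i, j ≤ n`, are
inequivalent `A_n(V)`-modules.  (Equivalence of `M(i)` and `M(j)` is expressed via
a linear endomorphism `f` of `M` mapping `M(i)` isomorphically onto `M(j)` and
commuting with all `o(a)` on `M(i)`.) -/
theorem statement10 {F : Type u} {V : Type v} {M : Type w} [Field F] [IsAlgClosed F]
    [AddCommGroup V] [Module F V] [AddCommGroup M] [Module F M]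
    (hchar : (2 : F) ≠ 0) (voa : VOA F V) (GM : GradedMod F V M voa)
    (hirr : GM.toWeakMod.Irreducible) (h0 : GM.gr 0 ≠ ⊥) (n : ℕ) :
    (∀ i : ℕ, i ≤ n → GM.gr i ≠ ⊥ →
      ∀ N : Submodule F M, N ≤ GM.gr i →
        (∀ a : V, ∀ w ∈ N, GM.toWeakMod.op a w ∈ N) → N = ⊥ ∨ N = GM.gr i) ∧
    (∀ i j : ℕ, i ≤ n → j ≤ n → i ≠ j → GM.gr i ≠ ⊥ → GM.gr j ≠ ⊥ →
      ¬ ∃ f : M →ₗ[F] M,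
        Submodule.map f (GM.gr i) = GM.gr j ∧
        Disjoint (LinearMap.ker f) (GM.gr i) ∧
        ∀ a : V, ∀ w ∈ GM.gr i,
          f (GM.toWeakMod.op a w) = GM.toWeakMod.op a (f w)) := by
  refine ⟨fun i _ _ N hN hop => GM.eq_bot_or_eq_gr hirr hN hop, ?_⟩
  rintro i j - - hij hi hj ⟨f, hmap, hdisj, hf⟩
  rcases lt_or_gt_of_ne hij with hlt | hlt
  · obtain ⟨T, hT, hT0, x, hx, hTx⟩ :=
      GM.exists_separating hirr h0 (by exact_mod_cast hlt : (i : ℤ) < j) hj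
    rw [← hmap] at hx
    obtain ⟨w, hw, rfl⟩ := hx
    apply hTx
    rw [← GM.map_modes_zero hf hT hw, hT0 w hw, map_zero]
  · obtain ⟨T, hT, hT0, x, hx, hTx⟩ :=
      GM.exists_separating hirr h0 (by exact_mod_cast hlt : (j : ℤ) < i) hi
    refine hTx (Submodule.disjoint_def.1 hdisj _ ?_ (GM.modes_zero_apply_mem hT hx))
    rw [LinearMap.mem_ker, GM.map_modes_zero hf hT hx]
    exact hT0 _ (hmap ▸ Submodule.mem_map_of_mem hx)
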